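/- Let μ ∈ ℂ∖{0} and η ∈ ℂ∖{0}. Every g ∈ V₂(μ) is a finite linear combination of functions of the form z ↦ f₁(z)·f₂(z+η) with f₁, f₂ ∈ V₁(μ). Consequently, for every c₂ ∈ V₂(μ) there exists an operator in 𝒱₂(μ) whose coefficient of the shift F ↦ F(·+2η) equals c₂. -/

import Mathlib

open Complex Filter

noncomputable section

/-- The Jacobi theta function `θ₁(z|τ)`. -/
def θ (τ z : ℂ) : ℂ :=
  I * ∑' n : ℤ, (-1 : ℂ) ^ n * Complex.exp (Real.pi * I * τ * ((n : ℂ) - 1/2) ^ 2) *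
    Complex.exp (Real.pi * I * (2 * (n : ℂ) - 1) * z)

/-- `P_k(η,z) = ∏_{ℓ=0}^{k-1} θ(2z+2ℓη)`. -/
def Pk (τ η : ℂ) (k : ℕ) (z : ℂ) : ℂ :=
  ∏ ℓ ∈ Finset.range k, θ τ (2 * z + 2 * (ℓ : ℂ) * η)

/-- Membership in the space `V_k(μ)`. -/
def memVk (τ μ η : ℂ) (k : ℕ) (g : ℂ → ℂ) : Prop :=
  MeromorphicOn g Set.univ ∧ (∀ z, g (z + 1) = g z) ∧ (∀ z, g (z + τ) = μ ^ k * g z) ∧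
  ∃ h : ℂ → ℂ, Differentiable ℂ h ∧ ∀ z, Pk τ η k z ≠ 0 → g z * Pk τ η k z = h z

/-- A meromorphic function is regular at a point. -/
def RegularAt (g : ℂ → ℂ) (p : ℂ) : Prop :=
  ∃ h : ℂ → ℂ, AnalyticAt ℂ h p ∧ ∀ᶠ z in nhdsWithin p {p}ᶜ, g z = h z

/-- `g` has at most a simple pole at `p`, with residue `r`. -/
def SimplePoleAt (g : ℂ → ℂ) (p r : ℂ) : Prop :=
  ∃ h : ℂ → ℂ, AnalyticAt ℂ h p ∧ ∀ᶠ z in nhdsWithin p {p}ᶜ, g z = r / (z - p) + h z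

/-- `p` belongs to the half-lattice `Λ/2`. -/
def HalfLattice (τ p : ℂ) : Prop := ∃ m n : ℤ, p = ((m : ℂ) + τ * n) / 2

/-- Membership in `V₁(μ)`. -/
def memV1 (τ μ : ℂ) (f : ℂ → ℂ) : Prop :=
  MeromorphicOn f Set.univ ∧ (∀ z, f (z + 1) = f z) ∧ (∀ z, f (z + τ) = μ * f z) ∧
  (∀ p : ℂ, ¬ HalfLattice τ p → RegularAt f p) ∧
  (∀ p : ℂ, HalfLattice τ p → ∃ r : ℂ, SimplePoleAt f p r)

/-- The analytic difference operator `A(f)`. -/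
def ADO (η : ℂ) (f : ℂ → ℂ) : Module.End ℂ (ℂ → ℂ) where
  toFun F := fun z => f z * F (z + η) + f (-z) * F (z - η)
  map_add' F G := by funext z; simp [Pi.add_apply]; ring
  map_smul' c F := by funext z; simp [Pi.smul_apply, smul_eq_mul]; ring

/-- `𝒱_k(μ)`: the span of `k`-fold products of operators `A(f)`, `f ∈ V₁(μ)`. -/
def Vcal (τ μ η : ℂ) (k : ℕ) : Submodule ℂ (Module.End ℂ (ℂ → ℂ)) :=
  Submodule.span ℂ {T | ∃ f : Fin k → (ℂ → ℂ), (∀ i, memV1 τ μ (f i)) ∧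
    T = (List.ofFn fun i => ADO η (f i)).prod}


/-! ### Entire functions -/

/-- An entire function vanishing on the zero set of an entire function with simple zeros is
divisible by it. -/
lemma exists_differentiable_eq_mul {F G : ℂ → ℂ} (hF : Differentiable ℂ F)
    (hG : Differentiable ℂ G) (h : ∀ p, G p = 0 → F p = 0 ∧ deriv G p ≠ 0) :
    ∃ H : ℂ → ℂ, Differentiable ℂ H ∧ ∀ z, F z = G z * H z := by
  classical
  refine ⟨fun z ↦ if G z = 0 then deriv F z / deriv G z else F z / G z, fun p ↦ ?_, fun z ↦ ?_⟩
  · by_cases hp : G p = 0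
    · obtain ⟨hFp, hGp⟩ := h p hp
      have hdF : DifferentiableAt ℂ (dslope F p) p :=
        ((differentiableOn_dslope univ_mem).2 hF.differentiableOn).differentiableAt univ_mem
      have hdG : DifferentiableAt ℂ (dslope G p) p :=
        ((differentiableOn_dslope univ_mem).2 hG.differentiableOn).differentiableAt univ_mem
      have hne : dslope G p p ≠ 0 := by rwa [dslope_same]
      refine (hdF.div hdG hne).congr_of_eventuallyEq ?_
      filter_upwards [hdG.continuousAt.eventually_ne hne] with z hz
      rcases eq_or_ne z p with rfl | hzp
      · simp [hp]
      · have hs : z - p ≠ 0 := sub_ne_zero.2 hzp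
        have eF : F z = (z - p) * dslope F p z := by
          rw [dslope_of_ne _ hzp, slope_def_field, hFp]; field_simp; ring
        have eG : G z = (z - p) * dslope G p z := by
          rw [dslope_of_ne _ hzp, slope_def_field, hp]; field_simp; ring
        rw [if_neg (by rw [eG]; exact mul_ne_zero hs hz), Pi.div_apply, eF, eG,
          mul_div_mul_left _ _ hs]
    · refine ((hF p).div (hG p) hp).congr_of_eventuallyEq ?_
      filter_upwards [(hG p).continuousAt.eventually_ne hp] with z hz
      simp [hz]
  · by_cases hz : G z = 0
    · simp [hz, (h z hz).1]
    · simp [hz, mul_div_cancel₀]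

/-- The period lattice `ℤ + τℤ`. -/
def periodLattice (τ : ℂ) : AddSubgroup ℂ := AddSubgroup.closure {1, τ}

lemma mem_periodLattice {τ z : ℂ} : z ∈ periodLattice τ ↔ ∃ m n : ℤ, (m : ℂ) + n * τ = z := by
  simp [periodLattice, AddSubgroup.mem_closure_pair]

lemma countable_periodLattice (τ : ℂ) : (periodLattice τ : Set ℂ).Countable := by
  refine (Set.countable_range fun p : ℤ × ℤ ↦ (p.1 : ℂ) + p.2 * τ).mono fun z hz ↦ ?_
  obtain ⟨m, n, h⟩ := mem_periodLattice.1 hz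
  exact ⟨(m, n), h⟩

lemma halfLattice_iff {τ p : ℂ} : HalfLattice τ p ↔ 2 * p ∈ periodLattice τ := by
  rw [mem_periodLattice, HalfLattice]
  refine exists_congr fun m ↦ exists_congr fun n ↦ ?_
  rw [eq_div_iff two_ne_zero, mul_comm p, mul_comm τ, eq_comm]

/-- A doubly periodic entire function is constant. -/
lemma Differentiable.eq_of_doublyPeriodic {H : ℂ → ℂ} (hH : Differentiable ℂ H) {τ : ℂ}
    (hτ : 0 < τ.im) (h1 : Function.Periodic H 1) (h2 : Function.Periodic H τ) (z w : ℂ) :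
    H z = H w := by
  refine hH.apply_eq_apply_of_bounded ?_ z w
  have hK : IsCompact (Set.image (fun p : ℝ × ℝ ↦ H (p.1 + p.2 * τ))
      (Set.Icc 0 1 ×ˢ Set.Icc 0 1)) := by
    refine (isCompact_Icc.prod isCompact_Icc).image (hH.continuous.comp ?_)
    fun_prop
  refine hK.isBounded.subset ?_
  rintro _ ⟨z, rfl⟩
  set y : ℝ := z.im / τ.im with hy
  set x : ℝ := z.re - y * τ.re with hx
  have hz : z = x + y * τ := by
    apply Complex.ext
    · simp [hx]
    · simp [hy, hτ.ne']
  refine ⟨(Int.fract x, Int.fract y), ⟨⟨Int.fract_nonneg _, (Int.fract_lt_one _).le⟩,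
    ⟨Int.fract_nonneg _, (Int.fract_lt_one _).le⟩⟩, ?_⟩
  have e : z = ((Int.fract x : ℝ) + (Int.fract y : ℝ) * τ + (⌊x⌋ : ℤ) * (1 : ℂ)) +
      (⌊y⌋ : ℤ) * τ := by
    have hx' : (x : ℂ) = (⌊x⌋ : ℤ) + (Int.fract x : ℝ) := by
      exact_mod_cast (Int.floor_add_fract x).symm
    have hy' : (y : ℂ) = (⌊y⌋ : ℤ) + (Int.fract y : ℝ) := by
      exact_mod_cast (Int.floor_add_fract y).symm
    rw [hz, hx', hy']; ring
  simp only
  rw [e, h2.int_mul ⌊y⌋, h1.int_mul ⌊x⌋]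

/-- Two continuous functions which agree off a countable set are equal. -/
lemma Continuous.eq_of_eq_off_countable {F G : ℂ → ℂ} (hF : Continuous F) (hG : Continuous G)
    {s : Set ℂ} (hs : s.Countable) (h : ∀ z ∉ s, F z = G z) (z : ℂ) : F z = G z :=
  congrFun (hF.ext_on (hs.dense_compl ℝ) hG fun w hw ↦ h w hw) z

/-! ### The product `∏ (1 - x ^ n w)` -/

/-- The infinite `x`-Pochhammer symbol `(w; x)_∞`. -/
def infPochhammer (x w : ℂ) : ℂ := ∏' n : ℕ, (1 - x ^ n * w)

lemma multipliable_infPochhammer {x : ℂ} (hx : ‖x‖ < 1) (w : ℂ) :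
    Multipliable fun n : ℕ ↦ 1 - x ^ n * w := by
  apply multipliable_one_add_of_summable (f := fun n ↦ -(x ^ n * w))
  simpa using (summable_geometric_of_lt_one (norm_nonneg x) hx).mul_right ‖w‖

lemma infPochhammer_eq {x : ℂ} (hx : ‖x‖ < 1) (w : ℂ) :
    infPochhammer x w = (1 - w) * infPochhammer x (x * w) := by
  rw [infPochhammer, tprod_eq_zero_mul']
  · simp [infPochhammer, pow_succ, mul_assoc]
  · simpa [pow_succ, mul_assoc] using multipliable_infPochhammer hx (x * w)

lemma infPochhammer_ne_zero {x : ℂ} (hx : ‖x‖ < 1) {w : ℂ} (h : ∀ n : ℕ, x ^ n * w ≠ 1) :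
    infPochhammer x w ≠ 0 := by
  refine tprod_one_add_ne_zero_of_summable (f := fun n ↦ -(x ^ n * w)) (fun n ↦ ?_) ?_
  · simpa [← sub_eq_add_neg, sub_eq_zero] using (h n).symm
  · simpa using (summable_geometric_of_lt_one (norm_nonneg x) hx).mul_right ‖w‖

lemma differentiable_infPochhammer {x : ℂ} (hx : ‖x‖ < 1) :
    Differentiable ℂ (infPochhammer x) := by
  have hm : HasProdLocallyUniformlyOn (fun n w ↦ 1 - x ^ n * w) (infPochhammer x) Set.univ := by
    simp_rw [sub_eq_add_neg]
    refine hasProdLocallyUniformlyOn_of_forall_compact isOpen_univ fun K _ hcK ↦ ?_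
    obtain ⟨R, hR⟩ := hcK.isBounded.exists_norm_le
    have := ((summable_geometric_of_lt_one (norm_nonneg x) hx).mul_right
      R).hasProdUniformlyOn_nat_one_add (f := fun n w ↦ -(x ^ n * w)) hcK
      (.of_forall fun n w hw ↦ ?_) (fun _ ↦ by fun_prop)
    · have e : infPochhammer x = fun w ↦ ∏' n : ℕ, (1 + -(x ^ n * w)) := by
        funext w; simp only [infPochhammer, sub_eq_add_neg]
      rwa [e]
    · simpa using mul_le_mul_of_nonneg_left (hR w hw) (by positivity)
  rw [← differentiableOn_univ]
  exact hm.differentiableOn (.of_forall fun _ ↦ by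
    simpa [Finset.prod_fn] using DifferentiableOn.finsetProd (fun _ _ ↦ by fun_prop)) isOpen_univ

/-! ### The zeros of `θ` -/

/-- The product side of the Jacobi triple product, normalised to be `1`-periodic. -/
def thetaProd (τ z : ℂ) : ℂ :=
  infPochhammer (exp (2 * Real.pi * I * τ)) (exp (2 * Real.pi * I * z)) *
    infPochhammer (exp (2 * Real.pi * I * τ)) (exp (2 * Real.pi * I * (τ - z)))

lemma norm_exp_two_pi_I_mul_lt_one {τ : ℂ} (hτ : 0 < τ.im) : ‖exp (2 * Real.pi * I * τ)‖ < 1 :=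
  UpperHalfPlane.norm_exp_two_pi_I_lt_one ⟨τ, hτ⟩

lemma differentiable_thetaProd {τ : ℂ} (hτ : 0 < τ.im) : Differentiable ℂ (thetaProd τ) := by
  have h := differentiable_infPochhammer (norm_exp_two_pi_I_mul_lt_one hτ)
  exact (h.comp (by fun_prop : Differentiable ℂ fun z ↦ exp (2 * Real.pi * I * z))).mul
    (h.comp (by fun_prop : Differentiable ℂ fun z ↦ exp (2 * Real.pi * I * (τ - z))))

lemma exp_two_pi_I_mul_add_int (z : ℂ) (n : ℤ) :
    exp (2 * Real.pi * I * (z + n)) = exp (2 * Real.pi * I * z) :=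
  exp_eq_exp_iff_exists_int.2 ⟨n, by ring⟩

lemma thetaProd_add_one (τ z : ℂ) : thetaProd τ (z + 1) = thetaProd τ z := by
  have h1 := exp_two_pi_I_mul_add_int z 1
  have h2 := exp_two_pi_I_mul_add_int (τ - z) (-1)
  rw [thetaProd, thetaProd, ← h1, ← h2]
  push_cast
  ring_nf

lemma thetaProd_add_self {τ : ℂ} (hτ : 0 < τ.im) (z : ℂ) :
    thetaProd τ (z + τ) = -exp (-(2 * Real.pi * I * z)) * thetaProd τ z := by
  have hx := norm_exp_two_pi_I_mul_lt_one hτ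
  have e1 : exp (2 * Real.pi * I * (z + τ)) =
      exp (2 * Real.pi * I * τ) * exp (2 * Real.pi * I * z) := by
    rw [← Complex.exp_add]; ring_nf
  have e2 : exp (2 * Real.pi * I * (τ - (z + τ))) = exp (-(2 * Real.pi * I * z)) := by ring_nf
  have e3 : exp (2 * Real.pi * I * (τ - z)) =
      exp (2 * Real.pi * I * τ) * exp (-(2 * Real.pi * I * z)) := by
    rw [← Complex.exp_add]; ring_nf
  have e4 : exp (2 * Real.pi * I * z) * exp (-(2 * Real.pi * I * z)) = 1 := by
    rw [← Complex.exp_add]; simp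
  rw [thetaProd, thetaProd, e1, e2, e3, infPochhammer_eq hx (exp (2 * Real.pi * I * z)),
    infPochhammer_eq hx (exp (-(2 * Real.pi * I * z)))]
  linear_combination (-(infPochhammer (exp (2 * Real.pi * I * τ))
    (exp (2 * Real.pi * I * τ) * exp (2 * Real.pi * I * z))) * infPochhammer
    (exp (2 * Real.pi * I * τ)) (exp (2 * Real.pi * I * τ) * exp (-(2 * Real.pi * I * z)))) * e4

lemma mem_periodLattice_of_exp_eq_one {τ z : ℂ} (n : ℤ)
    (h : exp (2 * Real.pi * I * (z + n * τ)) = 1) : z ∈ periodLattice τ := by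
  obtain ⟨m, hm⟩ := exp_eq_one_iff.1 h
  have h2 : z + n * τ = m := by
    have : (2 * Real.pi * I : ℂ) ≠ 0 := two_pi_I_ne_zero
    apply mul_left_cancel₀ this
    rw [hm]; ring
  exact mem_periodLattice.2 ⟨m, -n, by push_cast; linear_combination -h2⟩

lemma mem_periodLattice_of_thetaProd_eq_zero {τ : ℂ} (hτ : 0 < τ.im) {z : ℂ}
    (h : thetaProd τ z = 0) : z ∈ periodLattice τ := by
  have hx := norm_exp_two_pi_I_mul_lt_one hτ
  by_contra hz
  refine mul_ne_zero (infPochhammer_ne_zero hx fun n hn ↦ ?_)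
    (infPochhammer_ne_zero hx fun n hn ↦ ?_) h
  · rw [← Complex.exp_nat_mul, ← Complex.exp_add] at hn
    refine hz (mem_periodLattice_of_exp_eq_one n ?_)
    rw [← hn]; push_cast; ring_nf
  · rw [← Complex.exp_nat_mul, ← Complex.exp_add] at hn
    refine hz (neg_mem_iff.1 (mem_periodLattice_of_exp_eq_one (n + 1) ?_))
    rw [← hn]; push_cast; ring_nf

lemma deriv_thetaProd_zero_ne_zero {τ : ℂ} (hτ : 0 < τ.im) :
    thetaProd τ 0 = 0 ∧ deriv (thetaProd τ) 0 ≠ 0 := by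
  have hx := norm_exp_two_pi_I_mul_lt_one hτ
  set x := exp (2 * Real.pi * I * τ) with hxdef
  set ψ : ℂ → ℂ := fun z ↦ infPochhammer x (exp (2 * Real.pi * I * (z + τ))) *
    infPochhammer x (exp (2 * Real.pi * I * (τ - z))) with hψ
  have hψd : Differentiable ℂ ψ := by
    have h := differentiable_infPochhammer hx
    exact (h.comp (by fun_prop : Differentiable ℂ fun z ↦ exp (2 * Real.pi * I * (z + τ)))).mul
      (h.comp (by fun_prop : Differentiable ℂ fun z ↦ exp (2 * Real.pi * I * (τ - z))))
  have e : thetaProd τ = fun z ↦ (1 - exp (2 * Real.pi * I * z)) * ψ z := by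
    funext z
    have e1 : exp (2 * Real.pi * I * (z + τ)) = x * exp (2 * Real.pi * I * z) := by
      rw [hxdef, ← Complex.exp_add]; ring_nf
    simp only [hψ]
    rw [thetaProd, infPochhammer_eq hx (exp (2 * Real.pi * I * z)), e1]
    ring
  have h0 : infPochhammer x x ≠ 0 := by
    refine infPochhammer_ne_zero hx fun n hn ↦ ?_
    rw [← pow_succ] at hn
    have := pow_lt_one₀ (norm_nonneg x) hx n.succ_ne_zero
    rw [← norm_pow, hn] at this
    simp at this
  have hE : HasDerivAt (fun z : ℂ ↦ 1 - exp (2 * Real.pi * I * z))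
      (-(exp (2 * Real.pi * I * 0) * (2 * Real.pi * I * 1))) 0 :=
    (((hasDerivAt_id (0 : ℂ)).const_mul (2 * Real.pi * I : ℂ)).cexp).const_sub 1
  have hD := hE.mul (hψd 0).hasDerivAt
  rw [e]
  refine ⟨by simp, ?_⟩
  have hD' : deriv (fun z : ℂ ↦ (1 - exp (2 * Real.pi * I * z)) * ψ z) 0 = _ := hD.deriv
  rw [hD']
  simp [hψ, ← hxdef, h0]

lemma theta_eq_jacobiTheta₂ (τ z : ℂ) :
    θ τ z = I * exp (Real.pi * I * τ / 4 - Real.pi * I * z) *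
      jacobiTheta₂ (z + 1 / 2 - τ / 2) τ := by
  rw [θ, mul_assoc I, jacobiTheta₂, ← tsum_mul_left (a := exp _)]
  refine congrArg (I * ·) (tsum_congr fun n ↦ ?_)
  have h : (-1 : ℂ) ^ n = exp (Real.pi * I * n) := by
    rw [mul_comm, Complex.exp_int_mul, Complex.exp_pi_mul_I]
  rw [jacobiTheta₂_term, h, ← Complex.exp_add, ← Complex.exp_add, ← Complex.exp_add]
  ring_nf

lemma differentiable_theta {τ : ℂ} (hτ : 0 < τ.im) : Differentiable ℂ (θ τ) := by
  have h0 : Differentiable ℂ (jacobiTheta₂ · τ) := fun z ↦ differentiableAt_jacobiTheta₂_fst z hτ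
  have h : Differentiable ℂ fun z ↦ jacobiTheta₂ (z + 1 / 2 - τ / 2) τ :=
    h0.comp (by fun_prop : Differentiable ℂ fun z : ℂ ↦ z + 1 / 2 - τ / 2)
  rw [funext (theta_eq_jacobiTheta₂ τ)]
  fun_prop

lemma theta_add_one (τ z : ℂ) : θ τ (z + 1) = -θ τ z := by
  have e : exp (Real.pi * I * τ / 4 - Real.pi * I * (z + 1)) =
      -exp (Real.pi * I * τ / 4 - Real.pi * I * z) := by
    rw [mul_add, ← sub_sub, mul_one, Complex.exp_sub _ (Real.pi * I), Complex.exp_pi_mul_I]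
    ring
  rw [theta_eq_jacobiTheta₂, theta_eq_jacobiTheta₂, e, ← jacobiTheta₂_add_left (z + 1 / 2 - τ / 2)]
  ring_nf

lemma theta_add_self (τ z : ℂ) :
    θ τ (z + τ) = -exp (-(Real.pi * I * τ) - 2 * Real.pi * I * z) * θ τ z := by
  have e : z + τ + 1 / 2 - τ / 2 = (z + 1 / 2 - τ / 2) + τ := by ring
  rw [theta_eq_jacobiTheta₂, theta_eq_jacobiTheta₂, e, jacobiTheta₂_add_left']
  have e2 : exp (Real.pi * I * τ / 4 - Real.pi * I * (z + τ)) *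
      exp (-Real.pi * I * (τ + 2 * (z + 1 / 2 - τ / 2))) =
      -exp (-(Real.pi * I * τ) - 2 * Real.pi * I * z) *
        exp (Real.pi * I * τ / 4 - Real.pi * I * z) := by
    rw [neg_eq_neg_one_mul (exp _), ← Complex.exp_neg_pi_mul_I, ← Complex.exp_add,
      ← Complex.exp_add, ← Complex.exp_add]
    ring_nf
  linear_combination I * jacobiTheta₂ (z + 1 / 2 - τ / 2) τ * e2

lemma theta_neg (τ z : ℂ) : θ τ (-z) = -θ τ z := by
  have e : -z + 1 / 2 - τ / 2 = -((z + 1 / 2 - τ / 2) - 1 + τ) := by ring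
  rw [theta_eq_jacobiTheta₂, theta_eq_jacobiTheta₂, e, jacobiTheta₂_neg_left,
    jacobiTheta₂_add_left', ← jacobiTheta₂_add_left (z + 1 / 2 - τ / 2 - 1), sub_add_cancel]
  have e2 : exp (Real.pi * I * τ / 4 - Real.pi * I * -z) *
      exp (-Real.pi * I * (τ + 2 * (z + 1 / 2 - τ / 2 - 1))) =
      -exp (Real.pi * I * τ / 4 - Real.pi * I * z) := by
    rw [neg_eq_neg_one_mul (exp _), ← Complex.exp_pi_mul_I, ← Complex.exp_add,
      ← Complex.exp_add]
    ring_nf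
  linear_combination I * jacobiTheta₂ (z + 1 / 2 - τ / 2) τ * e2

/-- A predicate invariant under translation by `1` and by `τ` is invariant under the lattice. -/
lemma iff_of_sub_mem_periodLattice {τ : ℂ} {P : ℂ → Prop} (h1 : ∀ z, P (z + 1) ↔ P z)
    (h2 : ∀ z, P (z + τ) ↔ P z) {z w : ℂ} (hzw : z - w ∈ periodLattice τ) : P z ↔ P w := by
  suffices H : ∀ v ∈ periodLattice τ, ∀ w, P (w + v) ↔ P w by simpa using H _ hzw w
  intro v hv
  induction hv using AddSubgroup.closure_induction with
  | mem x hx => rcases hx with rfl | rfl <;> assumption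
  | zero => simp
  | add x y _ _ hx hy => intro w; rw [← add_assoc, hy, hx]
  | neg x _ hx => intro w; rw [← hx (w + -x), neg_add_cancel_right]

lemma theta_eq_zero_of_mem {τ z : ℂ} (hz : z ∈ periodLattice τ) : θ τ z = 0 := by
  refine (iff_of_sub_mem_periodLattice (P := (θ τ · = 0)) (w := 0) (fun z ↦ ?_) (fun z ↦ ?_)
    (by simpa using hz)).2 ?_
  · rw [theta_add_one, neg_eq_zero]
  · rw [theta_add_self, neg_mul, neg_eq_zero, mul_eq_zero, or_iff_right (exp_ne_zero _)]
  · have := theta_neg τ 0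
    rw [neg_zero] at this
    exact self_eq_neg.1 this

/-- Multiple zeros propagate along quasi-periods. -/
lemma doubleZero_add_iff {F M : ℂ → ℂ} (hF : Differentiable ℂ F) (hM : Differentiable ℂ M)
    (hM0 : ∀ z, M z ≠ 0) {v : ℂ} (h : ∀ z, F (z + v) = M z * F z) (z : ℂ) :
    F (z + v) = 0 ∧ deriv F (z + v) = 0 ↔ F z = 0 ∧ deriv F z = 0 := by
  have hd : deriv F (z + v) = deriv M z * F z + M z * deriv F z := by
    rw [← deriv_comp_add_const, funext h]
    exact deriv_mul (hM z) (hF z)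
  rw [h, hd, mul_eq_zero, or_iff_right (hM0 z)]
  refine and_congr_right fun h0 ↦ ?_
  rw [h0, mul_zero, zero_add, mul_eq_zero, or_iff_right (hM0 z)]

lemma deriv_thetaProd_ne_zero {τ : ℂ} (hτ : 0 < τ.im) {z : ℂ} (hz : thetaProd τ z = 0) :
    deriv (thetaProd τ) z ≠ 0 := by
  intro h
  have hd := differentiable_thetaProd hτ
  refine (deriv_thetaProd_zero_ne_zero hτ).2 ((iff_of_sub_mem_periodLattice
    (P := fun z ↦ thetaProd τ z = 0 ∧ deriv (thetaProd τ) z = 0) (w := 0) (fun z ↦ ?_)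
    (fun z ↦ ?_) (by simpa using mem_periodLattice_of_thetaProd_eq_zero hτ hz)).1 ⟨hz, h⟩).2
  · exact doubleZero_add_iff hd (differentiable_const 1) (by simp)
      (by simp [thetaProd_add_one]) z
  · exact doubleZero_add_iff hd (by fun_prop) (fun z ↦ neg_ne_zero.2 (exp_ne_zero _))
      (thetaProd_add_self hτ) z

/-- A form of the Jacobi triple product, with unspecified constant. -/
lemma exists_theta_eq_thetaProd {τ : ℂ} (hτ : 0 < τ.im) :
    ∃ c : ℂ, ∀ z, θ τ z = c * (exp (-(Real.pi * I * z)) * thetaProd τ z) := by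
  have hd := differentiable_thetaProd hτ
  have hz := @mem_periodLattice_of_thetaProd_eq_zero τ hτ
  obtain ⟨H, hH, hfac⟩ := exists_differentiable_eq_mul
    (F := fun z ↦ exp (Real.pi * I * z) * θ τ z)
    ((by fun_prop : Differentiable ℂ fun z : ℂ ↦ exp (Real.pi * I * z)).mul
      (differentiable_theta hτ)) hd
    fun p hp ↦ ⟨by simp [theta_eq_zero_of_mem (hz hp)], deriv_thetaProd_ne_zero hτ hp⟩
  have hL := countable_periodLattice τ
  have h1 : Function.Periodic H 1 := by
    refine fun z ↦ Continuous.eq_of_eq_off_countable (F := fun z ↦ H (z + 1))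
      (hH.continuous.comp (by fun_prop)) hH.continuous hL (fun z hzL ↦ ?_) z
    have e := hfac (z + 1)
    rw [thetaProd_add_one, theta_add_one, mul_add, Complex.exp_add, mul_one,
      Complex.exp_pi_mul_I] at e
    refine mul_left_cancel₀ (fun h ↦ hzL (hz h)) (e.symm.trans ?_)
    rw [← hfac]; ring
  have h2 : Function.Periodic H τ := by
    refine fun z ↦ Continuous.eq_of_eq_off_countable (F := fun z ↦ H (z + τ))
      (hH.continuous.comp (by fun_prop)) hH.continuous hL (fun z hzL ↦ ?_) z
    have e := hfac (z + τ)
    have e2 : exp (Real.pi * I * (z + τ)) * exp (-(Real.pi * I * τ) - 2 * Real.pi * I * z) =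
        exp (-(2 * Real.pi * I * z)) * exp (Real.pi * I * z) := by
      rw [← Complex.exp_add, ← Complex.exp_add]; ring_nf
    rw [thetaProd_add_self hτ, theta_add_self] at e
    refine mul_left_cancel₀ (mul_ne_zero (neg_ne_zero.2 (exp_ne_zero (-(2 * Real.pi * I * z))))
      (fun h ↦ hzL (hz h))) (e.symm.trans ?_)
    linear_combination (-exp (-(2 * Real.pi * I * z))) * hfac z - θ τ z * e2
  refine ⟨H 0, fun z ↦ ?_⟩
  have e := hfac z
  rw [hH.eq_of_doublyPeriodic hτ h1 h2 z 0] at e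
  have e2 : exp (-(Real.pi * I * z)) * exp (Real.pi * I * z) = 1 := by
    rw [← Complex.exp_add]; simp
  linear_combination exp (-(Real.pi * I * z)) * e - θ τ z * e2

/-- Unless it vanishes identically, `θ` has simple zeros, located exactly at the periods. -/
lemma theta_zeros {τ : ℂ} (hτ : 0 < τ.im) {w : ℂ} (hw : θ τ w ≠ 0) :
    (∀ z, θ τ z = 0 ↔ z ∈ periodLattice τ) ∧ ∀ z, θ τ z = 0 → deriv (θ τ) z ≠ 0 := by
  obtain ⟨c, hc⟩ := exists_theta_eq_thetaProd hτ
  have hc0 : c ≠ 0 := by rintro rfl; simp [hc] at hw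
  have hzero : ∀ z, θ τ z = 0 → thetaProd τ z = 0 := fun z h ↦ by simpa [hc, hc0] using h
  refine ⟨fun z ↦ ⟨fun h ↦ mem_periodLattice_of_thetaProd_eq_zero hτ (hzero z h),
    theta_eq_zero_of_mem⟩, fun z h ↦ ?_⟩
  have hM : DifferentiableAt ℂ (fun z : ℂ ↦ c * exp (-(Real.pi * I * z))) z := by fun_prop
  have hd : deriv (θ τ) z = _ :=
    (hM.hasDerivAt.mul (differentiable_thetaProd hτ z).hasDerivAt |>.congr_of_eventuallyEq
      (.of_forall fun z ↦ by simp [hc, mul_assoc])).deriv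
  rw [hd, hzero z h, mul_zero, zero_add]
  exact mul_ne_zero (mul_ne_zero hc0 (exp_ne_zero _)) (deriv_thetaProd_ne_zero hτ (hzero z h))

/-! ### Theta functions of degree four -/

/-- The numerators of elements of `V₁(μ)`: entire functions with the same quasi-periods as
`z ↦ θ(2z) f(z)`, where `f ∈ V₁(μ)`. -/
structure ThetaSection (τ μ : ℂ) (k : ℂ → ℂ) : Prop where
  differentiable : Differentiable ℂ k
  add_one : ∀ z, k (z + 1) = k z
  add_self : ∀ z, k (z + τ) = μ * exp (-(4 * Real.pi * I * τ) - 8 * Real.pi * I * z) * k z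

lemma theta_two_mul_add_one (τ z : ℂ) : θ τ (2 * (z + 1)) = θ τ (2 * z) := by
  rw [show 2 * (z + 1) = 2 * z + 1 + 1 by ring, theta_add_one, theta_add_one, neg_neg]

lemma theta_two_mul_add_self (τ z : ℂ) :
    θ τ (2 * (z + τ)) = exp (-(4 * Real.pi * I * τ) - 8 * Real.pi * I * z) * θ τ (2 * z) := by
  rw [show 2 * (z + τ) = 2 * z + τ + τ by ring, theta_add_self, theta_add_self, ← mul_assoc,
    neg_mul_neg, ← Complex.exp_add]
  ring_nf

lemma thetaSection_prod {τ μ : ℂ} (hτ : 0 < τ.im) (a b c d : ℂ)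
    (h : exp (2 * Real.pi * I * (a + b + c + d)) = μ) :
    ThetaSection τ μ fun z ↦ θ τ (z - a) * θ τ (z - b) * θ τ (z - c) * θ τ (z - d) where
  differentiable := by
    have := differentiable_theta hτ
    fun_prop
  add_one z := by
    simp only [add_sub_right_comm, theta_add_one]
    ring
  add_self z := by
    have e : exp (-(Real.pi * I * τ) - 2 * Real.pi * I * (z - a)) *
        exp (-(Real.pi * I * τ) - 2 * Real.pi * I * (z - b)) *
        exp (-(Real.pi * I * τ) - 2 * Real.pi * I * (z - c)) *
        exp (-(Real.pi * I * τ) - 2 * Real.pi * I * (z - d)) =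
        μ * exp (-(4 * Real.pi * I * τ) - 8 * Real.pi * I * z) := by
      rw [← h, ← Complex.exp_add, ← Complex.exp_add, ← Complex.exp_add, ← Complex.exp_add]
      ring_nf
    simp only [add_sub_right_comm, theta_add_self, ← e]
    ring

/-- Quotients of theta sections by `θ(2z)` lie in `V₁(μ)`. -/
lemma ThetaSection.memV1 {τ μ : ℂ} {k : ℂ → ℂ} (hk : ThetaSection τ μ k) (hτ : 0 < τ.im)
    (hz : ∀ z, θ τ z = 0 ↔ z ∈ periodLattice τ) (hd : ∀ z, θ τ z = 0 → deriv (θ τ) z ≠ 0) :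
    memV1 τ μ fun z ↦ k z / θ τ (2 * z) := by
  have hθ : Differentiable ℂ fun z ↦ θ τ (2 * z) :=
    (differentiable_theta hτ).comp (by fun_prop : Differentiable ℂ fun z : ℂ ↦ 2 * z)
  refine ⟨fun z _ ↦ (hk.differentiable.analyticAt z).meromorphicAt.div
    (hθ.analyticAt z).meromorphicAt, fun z ↦ ?_, fun z ↦ ?_, fun p hp ↦ ?_, fun p hp ↦ ?_⟩
  · simp only [hk.add_one, theta_two_mul_add_one]
  · simp only [hk.add_self, theta_two_mul_add_self]
    rw [mul_right_comm, mul_comm (exp _), mul_div_mul_right _ _ (exp_ne_zero _), mul_div_assoc]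
  · rw [halfLattice_iff, ← hz] at hp
    exact ⟨_, (hk.differentiable.analyticAt p).div (hθ.analyticAt p) hp, .of_forall fun _ ↦ rfl⟩
  · rw [halfLattice_iff, ← hz] at hp
    have hdp : deriv (fun z ↦ θ τ (2 * z)) p ≠ 0 := by
      simpa [deriv_comp_mul_left] using hd _ hp
    have hana : AnalyticAt ℂ (dslope (fun z ↦ θ τ (2 * z)) p) p :=
      (((differentiableOn_dslope univ_mem).2 hθ.differentiableOn).analyticAt univ_mem)
    have hne : dslope (fun z ↦ θ τ (2 * z)) p p ≠ 0 := by rwa [dslope_same]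
    set e : ℂ → ℂ := k / dslope (fun z ↦ θ τ (2 * z)) p with he
    have hea : AnalyticAt ℂ e p := (hk.differentiable.analyticAt p).div hana hne
    have hes : AnalyticAt ℂ (dslope e p) p := by
      obtain ⟨s, hs, hes⟩ := hea.exists_mem_nhds_analyticOnNhd
      exact ((differentiableOn_dslope hs).2 hes.differentiableOn).analyticAt hs
    refine ⟨e p, dslope e p, hes, ?_⟩
    filter_upwards [self_mem_nhdsWithin] with z hzp
    have hs : z - p ≠ 0 := sub_ne_zero.2 hzp
    have e1 : θ τ (2 * z) = (z - p) * dslope (fun z ↦ θ τ (2 * z)) p z := by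
      rw [dslope_of_ne _ hzp, slope_def_field, hp]; field_simp; ring
    rw [e1, dslope_of_ne e hzp, slope_def_field, ← add_div, add_sub_cancel, he, Pi.div_apply,
      div_div, mul_comm]

/-- An affine-generic point avoids finitely many translates of the lattice. -/
lemma exists_forall_notMem_periodLattice (τ : ℂ) (L : List (ℂ × ℂ)) (hL : ∀ p ∈ L, p.1 ≠ 0) :
    ∃ x : ℂ, ∀ p ∈ L, p.1 * x + p.2 ∉ periodLattice τ := by
  have hc : (⋃ p ∈ {p | p ∈ L}, {x : ℂ | p.1 * x + p.2 ∈ periodLattice τ}).Countable := by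
    refine (L.finite_toSet.countable).biUnion fun p hp ↦
      (countable_periodLattice τ).preimage (f := fun x ↦ p.1 * x + p.2) fun x y hxy ↦ ?_
    exact mul_left_cancel₀ (hL p hp) (add_right_cancel hxy)
  obtain ⟨x, hx⟩ := (hc.dense_compl ℝ).nonempty
  exact ⟨x, by simpa using hx⟩

/-- Four points with prescribed sum which are pairwise inequivalent modulo the lattice. -/
lemma exists_four_points (τ σ : ℂ) : ∃ a b c d : ℂ, a + b + c + d = σ ∧
    b - a ∉ periodLattice τ ∧ c - a ∉ periodLattice τ ∧ d - a ∉ periodLattice τ ∧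
    c - b ∉ periodLattice τ ∧ d - b ∉ periodLattice τ ∧ d - c ∉ periodLattice τ := by
  obtain ⟨b, hb⟩ := exists_forall_notMem_periodLattice τ [(1, 0)] (by simp)
  obtain ⟨c, hc⟩ := exists_forall_notMem_periodLattice τ
    [(1, 0), (1, -b), (-1, σ - b), (-1, σ - b - b), (-2, σ - b)] (by simp)
  simp only [List.mem_cons, List.not_mem_nil, or_false, forall_eq_or_imp, forall_eq] at hb hc
  obtain ⟨h1, h2, h3, h4, h5⟩ := hc
  refine ⟨0, b, c, σ - b - c, by ring, ?_, ?_, ?_, ?_, ?_, ?_⟩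
  · convert hb using 2; ring
  · convert h1 using 2; ring
  · convert h3 using 2; ring
  · convert h2 using 2; ring
  · convert h4 using 2; ring
  · convert h5 using 2; ring

/-- The products `k₁(z) k₂(z + η)` of theta sections. -/
def sectionProducts (τ μ η : ℂ) : Set (ℂ → ℂ) :=
  {p | ∃ k₁ k₂, ThetaSection τ μ k₁ ∧ ThetaSection τ μ k₂ ∧ p = fun z ↦ k₁ z * k₂ (z + η)}

/-- The numerators of elements of `V₂(μ)`, as a space of theta functions of degree eight. -/
def degreeEight (τ μ η : ℂ) : Submodule ℂ (ℂ → ℂ) where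
  carrier := {h | Differentiable ℂ h ∧ (∀ z, h (z + 1) = h z) ∧ ∀ z, h (z + τ) =
    μ ^ 2 * exp (-(4 * Real.pi * I * τ) - 8 * Real.pi * I * z) *
      exp (-(4 * Real.pi * I * τ) - 8 * Real.pi * I * (z + η)) * h z}
  zero_mem' := ⟨differentiable_const 0, by simp, by simp⟩
  add_mem' {f g} hf hg := ⟨hf.1.add hg.1, fun z ↦ by simp [hf.2.1, hg.2.1],
    fun z ↦ by simp [hf.2.2, hg.2.2, mul_add]⟩
  smul_mem' c f hf := ⟨hf.1.const_smul c, fun z ↦ by simp [hf.2.1],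
    fun z ↦ by simp only [Pi.smul_apply, hf.2.2, smul_eq_mul]; ring⟩

lemma sectionProducts_subset_degreeEight (τ μ η : ℂ) :
    sectionProducts τ μ η ⊆ degreeEight τ μ η := by
  rintro _ ⟨k₁, k₂, h₁, h₂, rfl⟩
  refine ⟨h₁.differentiable.mul (h₂.differentiable.comp
    (by fun_prop : Differentiable ℂ fun z ↦ z + η)), fun z ↦ ?_, fun z ↦ ?_⟩
  · simp only [add_right_comm z _ η, h₁.add_one, h₂.add_one]
  · simp only [add_right_comm z _ η, h₁.add_self, h₂.add_self]
    ring

/-- A product of theta sections vanishing at three given points but not at a fourth one. -/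
lemma exists_sectionProduct {τ μ : ℂ} (hτ : 0 < τ.im)
    (hz : ∀ z, θ τ z = 0 ↔ z ∈ periodLattice τ) {σ : ℂ} (hσ : exp (2 * Real.pi * I * σ) = μ)
    (η : ℂ) {a b c d : ℂ} (ha : d - a ∉ periodLattice τ) (hb : d - b ∉ periodLattice τ)
    (hc : d - c ∉ periodLattice τ) :
    ∃ p ∈ sectionProducts τ μ η, p a = 0 ∧ p b = 0 ∧ p c = 0 ∧ p d ≠ 0 := by
  have h0 : θ τ 0 = 0 := theta_eq_zero_of_mem (zero_mem _)
  obtain ⟨s, hs⟩ := exists_forall_notMem_periodLattice τ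
    [(-1, d), (1, d - (σ - a - b))] (by simp)
  obtain ⟨t, ht⟩ := exists_forall_notMem_periodLattice τ
    [(-1, d + η), (2, d + η - (σ - (c + η)))] (by simp)
  simp only [List.mem_cons, List.not_mem_nil, or_false, forall_eq_or_imp, forall_eq] at hs ht
  refine ⟨_, ⟨_, _, thetaSection_prod hτ a b s (σ - a - b - s) (by rw [← hσ]; ring_nf),
    thetaSection_prod hτ (c + η) t t (σ - (c + η) - t - t) (by rw [← hσ]; ring_nf), rfl⟩,
    by simp [h0], by simp [h0], by simp [h0], ?_⟩
  simp only [ne_eq, mul_eq_zero, not_or, hz]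
  refine ⟨⟨⟨⟨ha, hb⟩, ?_⟩, ?_⟩, ⟨⟨?_, ?_⟩, ?_⟩, ?_⟩
  · convert hs.1 using 2; ring
  · convert hs.2 using 2; ring
  · convert hc using 2; ring
  · convert ht.1 using 2; ring
  · convert ht.1 using 2; ring
  · convert ht.2 using 2; ring

/-- Division by a translate of `θ`. -/
lemma exists_eq_theta_mul {τ : ℂ} (hτ : 0 < τ.im) (hz : ∀ z, θ τ z = 0 ↔ z ∈ periodLattice τ)
    (hd : ∀ z, θ τ z = 0 → deriv (θ τ) z ≠ 0) {F : ℂ → ℂ} (hF : Differentiable ℂ F) (a : ℂ)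
    (h : ∀ z, z - a ∈ periodLattice τ → F z = 0) :
    ∃ H : ℂ → ℂ, Differentiable ℂ H ∧ ∀ z, F z = θ τ (z - a) * H z := by
  refine exists_differentiable_eq_mul hF ((differentiable_theta hτ).comp
    (by fun_prop : Differentiable ℂ fun z ↦ z - a)) fun p hp ↦ ⟨h p ((hz _).1 hp), ?_⟩
  simpa [Function.comp_def, deriv_comp_sub_const] using hd _ hp

/-- An element of degree eight vanishing at four inequivalent points is a product of sections. -/
lemma mem_sectionProducts_of_zeros {τ μ η : ℂ} (hτ : 0 < τ.im)
    (hz : ∀ z, θ τ z = 0 ↔ z ∈ periodLattice τ) (hd : ∀ z, θ τ z = 0 → deriv (θ τ) z ≠ 0)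
    {a b c d : ℂ} (hσ : exp (2 * Real.pi * I * (a + b + c + d)) = μ)
    (hba : b - a ∉ periodLattice τ) (hca : c - a ∉ periodLattice τ)
    (hda : d - a ∉ periodLattice τ) (hcb : c - b ∉ periodLattice τ)
    (hdb : d - b ∉ periodLattice τ) (hdc : d - c ∉ periodLattice τ) {h : ℂ → ℂ}
    (hh : h ∈ degreeEight τ μ η) (ha0 : h a = 0) (hb0 : h b = 0) (hc0 : h c = 0)
    (hd0 : h d = 0) : h ∈ sectionProducts τ μ η := by
  have hμ : μ ≠ 0 := by rw [← hσ]; exact exp_ne_zero _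
  obtain ⟨hdiff, hone, hself⟩ := hh
  have hzero : ∀ u, h u = 0 → ∀ z, z - u ∈ periodLattice τ → h z = 0 := fun u hu z hzu ↦
    (iff_of_sub_mem_periodLattice (P := (h · = 0)) (fun z ↦ by rw [hone])
      (fun z ↦ by simp [hself, hμ, exp_ne_zero]) hzu).2 hu
  have hne : ∀ {u v z : ℂ}, v - u ∉ periodLattice τ → z - v ∈ periodLattice τ →
      θ τ (z - u) ≠ 0 := fun {u v z} huv hzv h0 ↦ huv <| by
    simpa using sub_mem ((hz _).1 h0) hzv
  obtain ⟨H₁, hH₁, e₁⟩ := exists_eq_theta_mul hτ hz hd hdiff a (hzero a ha0)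
  obtain ⟨H₂, hH₂, e₂⟩ := exists_eq_theta_mul hτ hz hd hH₁ b fun z hzb ↦ by
    simpa [e₁, hne hba hzb] using hzero b hb0 z hzb
  obtain ⟨H₃, hH₃, e₃⟩ := exists_eq_theta_mul hτ hz hd hH₂ c fun z hzc ↦ by
    simpa [e₁, e₂, hne hca hzc, hne hcb hzc] using hzero c hc0 z hzc
  obtain ⟨H, hH, e₄⟩ := exists_eq_theta_mul hτ hz hd hH₃ d fun z hzd ↦ by
    simpa [e₁, e₂, e₃, hne hda hzd, hne hdb hzd, hne hdc hzd] using hzero d hd0 z hzd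
  set k : ℂ → ℂ := fun z ↦ θ τ (z - a) * θ τ (z - b) * θ τ (z - c) * θ τ (z - d) with hk
  have hkS : ThetaSection τ μ k := thetaSection_prod hτ a b c d hσ
  have hfac : ∀ z, h z = k z * H z := fun z ↦ by rw [e₁, e₂, e₃, e₄, hk]; ring
  have hcount : {z | k z = 0}.Countable := by
    have hc : ∀ u, {z | θ τ (z - u) = 0}.Countable := fun u ↦ by
      simp only [hz]
      exact (countable_periodLattice τ).preimage (sub_left_injective (b := u))
    simp only [hk, mul_eq_zero, Set.ofPred_or]
    exact (((hc a).union (hc b)).union (hc c)).union (hc d)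
  have hHone : ∀ z, H (z + 1) = H z :=
    Continuous.eq_of_eq_off_countable (hH.continuous.comp (continuous_add_const 1))
      hH.continuous hcount fun z hkz ↦ mul_left_cancel₀ hkz <| by
        rw [← hfac, ← hone, hfac, hkS.add_one]
  have hHself : ∀ z, H (z + τ) =
      μ * exp (-(4 * Real.pi * I * τ) - 8 * Real.pi * I * (z + η)) * H z := by
    refine Continuous.eq_of_eq_off_countable (hH.continuous.comp (continuous_add_const τ))
      (by have := hH.continuous; fun_prop) hcount fun z hkz ↦ ?_
    have e := hself z
    rw [hfac, hfac z, hkS.add_self] at e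
    refine mul_left_cancel₀ (mul_ne_zero (mul_ne_zero hμ
      (exp_ne_zero (-(4 * Real.pi * I * τ) - 8 * Real.pi * I * z))) hkz) (e.trans ?_)
    ring
  refine ⟨k, fun z ↦ H (z - η), hkS, ⟨hH.comp (by fun_prop : Differentiable ℂ fun z ↦ z - η),
    fun z ↦ ?_, fun z ↦ ?_⟩, ?_⟩
  · simp only [add_sub_right_comm, hHone]
  · simp only [add_sub_right_comm, hHself, sub_add_cancel]
  · funext z
    simp [hfac]

/-- The multiplication map on theta sections of degree four is onto. -/
lemma degreeEight_le_span {τ μ : ℂ} (hτ : 0 < τ.im) (hμ : μ ≠ 0)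
    (hz : ∀ z, θ τ z = 0 ↔ z ∈ periodLattice τ) (hd : ∀ z, θ τ z = 0 → deriv (θ τ) z ≠ 0)
    (η : ℂ) : degreeEight τ μ η ≤ Submodule.span ℂ (sectionProducts τ μ η) := by
  intro h hh
  obtain ⟨σ, hσ⟩ : ∃ σ, exp (2 * Real.pi * I * σ) = μ :=
    ⟨log μ / (2 * Real.pi * I), by rw [mul_div_cancel₀ _ two_pi_I_ne_zero, exp_log hμ]⟩
  obtain ⟨a, b, c, d, hsum, hba, hca, hda, hcb, hdb, hdc⟩ := exists_four_points τ σ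
  have symm : ∀ {u v : ℂ}, u - v ∉ periodLattice τ → v - u ∉ periodLattice τ := fun h ↦ by
    rwa [← neg_sub, neg_mem_iff]
  obtain ⟨p, hp, pb, pc, pd, pa⟩ :=
    exists_sectionProduct hτ hz hσ η (symm hba) (symm hca) (symm hda)
  obtain ⟨q, hq, qa, qc, qd, qb⟩ := exists_sectionProduct hτ hz hσ η hba (symm hcb) (symm hdb)
  obtain ⟨r, hr, ra, rb, rd, rc⟩ := exists_sectionProduct hτ hz hσ η hca hcb (symm hdc)
  obtain ⟨s, hs, sa, sb, sc, sd⟩ := exists_sectionProduct hτ hz hσ η hda hdb hdc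
  set C : ℂ → ℂ := (h a / p a) • p + (h b / q b) • q + (h c / r c) • r + (h d / s d) • s with hC
  have hCmem : ∀ M : Submodule ℂ (ℂ → ℂ), sectionProducts τ μ η ⊆ M → C ∈ M := fun M hM ↦
    add_mem (add_mem (add_mem (M.smul_mem _ (hM hp)) (M.smul_mem _ (hM hq)))
      (M.smul_mem _ (hM hr))) (M.smul_mem _ (hM hs))
  have hR : h - C ∈ sectionProducts τ μ η := by
    refine mem_sectionProducts_of_zeros hτ hz hd (by rw [hsum, hσ]) hba hca hda hcb hdb hdc
      (sub_mem hh (hCmem _ (sectionProducts_subset_degreeEight τ μ η))) ?_ ?_ ?_ ?_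
    · simp [hC, pa, qa, ra, sa]
    · simp [hC, pb, qb, rb, sb]
    · simp [hC, pc, qc, rc, sc]
    · simp [hC, pd, qd, rd, sd]
  rw [← sub_add_cancel h C]
  exact add_mem (Submodule.subset_span hR) (hCmem _ Submodule.subset_span)

/-! ### The spaces `V₂(μ)` and `𝒱₂(μ)` -/

lemma Pk_two (τ η z : ℂ) : Pk τ η 2 z = θ τ (2 * z) * θ τ (2 * (z + η)) := by
  simp [Pk, Finset.prod_range_succ, mul_add]

/-- Elements of `V₂(μ)` are quotients of functions of degree eight by `P₂`. -/
lemma memVk.exists_degreeEight {τ μ η : ℂ}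
    (hz : ∀ z, θ τ z = 0 ↔ z ∈ periodLattice τ) {g : ℂ → ℂ} (hg : memVk τ μ η 2 g) :
    ∃ h ∈ degreeEight τ μ η, ∀ z, Pk τ η 2 z ≠ 0 → g z * Pk τ η 2 z = h z := by
  obtain ⟨-, hone, hself, h, hh, hgh⟩ := hg
  have hP1 : ∀ z, Pk τ η 2 (z + 1) = Pk τ η 2 z := fun z ↦ by
    rw [Pk_two, Pk_two, add_right_comm, theta_two_mul_add_one, theta_two_mul_add_one]
  have hPτ : ∀ z, Pk τ η 2 (z + τ) = exp (-(4 * Real.pi * I * τ) - 8 * Real.pi * I * z) *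
      exp (-(4 * Real.pi * I * τ) - 8 * Real.pi * I * (z + η)) * Pk τ η 2 z := fun z ↦ by
    rw [Pk_two, Pk_two, add_right_comm, theta_two_mul_add_self, theta_two_mul_add_self]
    ring
  have hcount : {z | Pk τ η 2 z = 0}.Countable := by
    simp only [Pk_two, mul_eq_zero, Set.ofPred_or, hz]
    refine ((countable_periodLattice τ).preimage (f := fun z ↦ 2 * z) fun x y hxy ↦ ?_).union
      ((countable_periodLattice τ).preimage (f := fun z ↦ 2 * (z + η)) fun x y hxy ↦ ?_)
    · simpa using hxy
    · simpa using hxy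
  refine ⟨h, ⟨hh, Continuous.eq_of_eq_off_countable
    (hh.continuous.comp (continuous_add_const 1)) hh.continuous hcount fun z hPz ↦ ?_,
    Continuous.eq_of_eq_off_countable (hh.continuous.comp (continuous_add_const τ))
      (by have := hh.continuous; fun_prop) hcount fun z hPz ↦ ?_⟩, hgh⟩
  · rw [← hgh z hPz, ← hgh (z + 1) (by rwa [hP1]), hP1, hone]
  · rw [← hgh z hPz, ← hgh (z + τ) ?_, hPτ, hself]
    · ring
    · rw [hPτ]
      exact mul_ne_zero (mul_ne_zero (exp_ne_zero _) (exp_ne_zero _)) hPz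

/-- Every element of `V₂(μ)` is a combination of products `f₁(z) f₂(z + η)`, `f₁, f₂ ∈ V₁(μ)`. -/
lemma memVk.exists_eq_sum {τ μ η : ℂ} (hτ : 0 < τ.im) (hμ : μ ≠ 0) {g : ℂ → ℂ}
    (hg : memVk τ μ η 2 g) :
    ∃ (n : ℕ) (c : Fin n → ℂ) (f₁ f₂ : Fin n → (ℂ → ℂ)),
      (∀ i, memV1 τ μ (f₁ i) ∧ memV1 τ μ (f₂ i)) ∧
      ∀ z, Pk τ η 2 z ≠ 0 → g z = ∑ i, c i * f₁ i z * f₂ i (z + η) := by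
  by_cases hw : ∃ w, θ τ w ≠ 0
  · obtain ⟨w, hw⟩ := hw
    obtain ⟨hz, hd⟩ := theta_zeros hτ hw
    obtain ⟨h, hh, hgh⟩ := hg.exists_degreeEight hz
    obtain ⟨n, c, p, hp⟩ := Submodule.mem_span_set'.1 (degreeEight_le_span hτ hμ hz hd η hh)
    choose k₁ k₂ hk₁ hk₂ hk using fun i ↦ (p i).2
    refine ⟨n, c, fun i z ↦ k₁ i z / θ τ (2 * z), fun i z ↦ k₂ i z / θ τ (2 * z),
      fun i ↦ ⟨(hk₁ i).memV1 hτ hz hd, (hk₂ i).memV1 hτ hz hd⟩, fun z hP ↦ ?_⟩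
    rw [eq_div_of_mul_eq hP (hgh z hP), ← hp, Finset.sum_apply, Finset.sum_div, Pk_two]
    refine Finset.sum_congr rfl fun i _ ↦ ?_
    rw [Pi.smul_apply, hk, smul_eq_mul, mul_div_assoc, mul_div_mul_comm, mul_assoc]
  · push Not at hw
    exact ⟨0, 0, 0, 0, fun i ↦ i.elim0, fun z hP ↦ absurd (by rw [Pk_two, hw, zero_mul]) hP⟩

/-- every `g ∈ V₂(μ)` is a finite linear combination of functions
`z ↦ f₁(z)f₂(z+η)` with `f₁,f₂ ∈ V₁(μ)`; consequently every `c₂ ∈ V₂(μ)` arises as the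
coefficient of the shift `F ↦ F(·+2η)` of some operator in `𝒱₂(μ)`. -/
theorem statement4 (τ : ℂ) (hτ : 0 < τ.im) (μ : ℂ) (hμ : μ ≠ 0) (η : ℂ) (hη : η ≠ 0) :
    (∀ g : ℂ → ℂ, memVk τ μ η 2 g →
      ∃ (n : ℕ) (c : Fin n → ℂ) (f₁ f₂ : Fin n → (ℂ → ℂ)),
        (∀ i, memV1 τ μ (f₁ i) ∧ memV1 τ μ (f₂ i)) ∧
        ∀ z, Pk τ η 2 z ≠ 0 → g z = ∑ i, c i * f₁ i z * f₂ i (z + η)) ∧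
    (∀ c₂ : ℂ → ℂ, memVk τ μ η 2 c₂ →
      ∃ T ∈ Vcal τ μ η 2, ∃ c₀ cm : ℂ → ℂ, ∀ F : ℂ → ℂ, ∀ z : ℂ,
        θ τ (2 * z) ≠ 0 → θ τ (2 * z + 2 * η) ≠ 0 → θ τ (2 * z - 2 * η) ≠ 0 →
        (T F) z = c₂ z * F (z + 2 * η) + c₀ z * F z + cm z * F (z - 2 * η)) := by
  refine ⟨fun g hg ↦ hg.exists_eq_sum hτ hμ, fun c₂ hc ↦ ?_⟩
  obtain ⟨n, c, f₁, f₂, hf, hsum⟩ := hc.exists_eq_sum hτ hμ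
  refine ⟨∑ i, c i • (ADO η (f₁ i) * ADO η (f₂ i)), Submodule.sum_mem _ fun i _ ↦
    Submodule.smul_mem _ _ (Submodule.subset_span ⟨![f₁ i, f₂ i], ?_, ?_⟩),
    fun z ↦ ∑ i, c i * (f₁ i z * f₂ i (-(z + η)) + f₁ i (-z) * f₂ i (z - η)),
    fun z ↦ ∑ i, c i * (f₁ i (-z) * f₂ i (-(z - η))), fun F z h₁ h₂ _ ↦ ?_⟩
  · simpa [Fin.forall_fin_two] using hf i
  · simp [List.ofFn_succ]
  · have hP : Pk τ η 2 z ≠ 0 := by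
      rw [Pk_two, mul_add]
      exact mul_ne_zero h₁ h₂
    rw [hsum z hP]
    simp only [LinearMap.coe_sum, Finset.sum_apply, Finset.sum_mul, ← Finset.sum_add_distrib]
    refine Finset.sum_congr rfl fun i _ ↦ ?_
    simp only [LinearMap.smul_apply, Module.End.mul_apply, ADO, LinearMap.coe_mk, AddHom.coe_mk,
      Pi.smul_apply, smul_eq_mul]
    rw [show z + η + η = z + 2 * η by ring, show z - η - η = z - 2 * η by ring,
      add_sub_cancel_right, sub_add_cancel]
    ring
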